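/- Fix a segment assignment φ relative to a rooted spanning tree D of G. Let s_0, s_1, …, s_n be states with s_0 the empty partial function, such that for every 0 ≤ k < n the state s_{k+1} is an extension of s_k; let v_k be the unique vertex in dom(s_k) \ dom(s_{k−1}), and assume that s_k(v_k) is the base segment containing the k-th position in the color order. Then the ordering π that assigns to each v_k the k-th position in the color order is a b-ordering of G. -/

import Mathlib

/-!
The step in which a vertex is added and the position it receives determine each other, so `π` is a
bijection onto `{1, …, n}`.

Take an edge whose ends are added in steps `j < k`, at the positions `p` and `q`. Values of states
persist, so the extension condition of step `k` says that the segment of `q` is that of `p` or the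
one just before it. In the first case `p` and `q` differ by at most `b`. In the second, `p` precedes
`q` in the color order although it lies in a later segment, hence it has strictly smaller color, and
`p - q = (b + 1) - (color q - color p)` lies between `1` and `b`.
-/

/-- `segm b i = ⌈i/(b+1)⌉`, the base-segment number of position `i`. -/
def segm (b i : ℕ) : ℕ := (i + b) / (b + 1)

/-- `color b i = ((i-1) mod (b+1)) + 1`, the color of position `i`. -/
def color (b i : ℕ) : ℕ := (i - 1) % (b + 1) + 1

/-- The segment `Θ_{(i,j)} = {i(b+1)+1, …, j(b+1)} ∩ {1,…,n}`. -/
def Seg (b n : ℕ) (i j : ℤ) : Set ℕ :=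
  {p : ℕ | i * (b + 1) < (p : ℤ) ∧ (p : ℤ) ≤ j * (b + 1) ∧ 1 ≤ p ∧ p ≤ n}

/-- `q` strictly precedes `p` in the color order (lexicographic by (color, segment)). -/
def ColorLt (b q p : ℕ) : Prop :=
  color b q < color b p ∨ (color b q = color b p ∧ segm b q < segm b p)

instance (b q p : ℕ) : Decidable (ColorLt b q p) := by
  unfold ColorLt; infer_instance

/-- The number of positions in `{1,…,n}` strictly preceding `p` in the color order;
the first `k` positions in the color order are those of rank `< k`. -/
def rank (b n p : ℕ) : ℕ := ((Finset.Icc 1 n).filter (fun q => ColorLt b q p)).card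

/-- A rooted spanning tree of `G` with root `u0` and parent map `pa`. -/
def IsRootedSpanningTree {V : Type*} (G : SimpleGraph V) (u0 : V) (pa : V → V) : Prop :=
  pa u0 = u0 ∧ (∀ v, v ≠ u0 → G.Adj v (pa v)) ∧ ∀ v, ∃ m : ℕ, pa^[m] v = u0

/-- A vertex is a leaf of the rooted tree with parent map `pa` if it is not the
parent of any vertex other than itself. -/
def IsLeaf {V : Type*} (pa : V → V) (v : V) : Prop := ∀ w, pa w = v → w = v

open Classical in
/-- The segment assigned by the segment assignment with start indices `φ`:
a leaf `v` gets `Θ_{(φ v, φ v + 4)}`, an inner vertex gets `Θ_{(φ v, φ v + 2)}`. -/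
noncomputable def SegOf {V : Type*} (b n : ℕ) (pa : V → V) (φ : V → ℤ) (v : V) : Set ℕ :=
  if IsLeaf pa v then Seg b n (φ v) (φ v + 4) else Seg b n (φ v) (φ v + 2)

/-- A state for the segment assignment with start indices `φ` (relative to the tree
with parent map `pa`): a partial map `s` from vertices to base-segment indices such that
(0) each assigned base segment `Θ_i` is contained in `φ v`;
(1) the vertices of `dom s` can be assigned to the first `|dom s|` positions in the
    color order compatibly with `s`;
(2) for every edge `uv`: if `s v = Θ_i` is defined and `s u` is undefined with
    `φ u = Θ_{(k,l)}` then `k ≤ i`, and if both `s u = Θ_k`, `s v = Θ_i` are defined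
    then `|i − k| ≤ 1`. -/
def IsState {V : Type*} [Fintype V] (G : SimpleGraph V) (b n : ℕ) (pa : V → V)
    (φ : V → ℤ) (s : V → Option ℤ) : Prop :=
  (∀ v i, s v = some i → Seg b n i (i + 1) ⊆ SegOf b n pa φ v) ∧
  (∃ g : V → ℕ, Set.BijOn g {v | (s v).isSome}
      {q : ℕ | 1 ≤ q ∧ q ≤ n ∧ rank b n q < {v | (s v).isSome}.ncard} ∧
      ∀ v i, s v = some i → g v ∈ Seg b n i (i + 1)) ∧
  (∀ u v i, G.Adj u v → s v = some i → s u = none → φ u ≤ i) ∧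
  (∀ u v i k, G.Adj u v → s u = some k → s v = some i → |i - k| ≤ 1)

/-- `s'` extends `s` by defining one new vertex `v`; for every edge `uv`
with `s' u = Θ_k` defined and `s' v = Θ_i`, one has `k − 1 ≤ i ≤ k`. -/
def IsExtension {V : Type*} (G : SimpleGraph V) (s s' : V → Option ℤ) : Prop :=
  ∃ v, s v = none ∧ (s' v).isSome ∧ (∀ w, w ≠ v → s' w = s w) ∧
    ∀ u k i, G.Adj u v → s' u = some k → s' v = some i → k - 1 ≤ i ∧ i ≤ k

lemma exists_bijOn_forall_apply_eq {α β γ : Type*} [Nonempty α] {s : Set α} {t : Set β} {u : Set γ}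
    {f : α → β} {g : α → γ} (hf : Set.BijOn f s t) (hg : Set.BijOn g s u) :
    ∃ h : β → γ, Set.BijOn h t u ∧ ∀ a ∈ s, h (f a) = g a :=
  ⟨g ∘ Function.invFunOn f s, hg.comp (hf.symm hf.invOn_invFunOn.symm),
    fun _ ha ↦ congrArg g (hf.invOn_invFunOn.1 ha)⟩

section ColorOrder

variable {b n p q r : ℕ}

/- The expected equation `p = (segm b p - 1) * (b + 1) + color b p` with both sides moved so that
no subtraction occurs. -/
lemma segm_mul_add_color (hp : 1 ≤ p) : segm b p * (b + 1) + color b p = p + (b + 1) := by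
  obtain ⟨m, rfl⟩ := Nat.exists_eq_add_of_le' hp
  have hsegm : segm b (m + 1) = m / (b + 1) + 1 := by
    rw [segm, show m + 1 + b = m + (b + 1) by ring, Nat.add_div_right m b.succ_pos]
  have hcolor : color b (m + 1) = m % (b + 1) + 1 := by rw [color, Nat.add_sub_cancel]
  rw [hsegm, hcolor]
  linarith [Nat.div_add_mod' m (b + 1)]

lemma one_le_color (b p : ℕ) : 1 ≤ color b p := Nat.le_add_left 1 _

lemma color_le (b p : ℕ) : color b p ≤ b + 1 := Nat.mod_lt (p - 1) b.succ_pos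

lemma ColorLt.trans (hpq : ColorLt b p q) (hqr : ColorLt b q r) : ColorLt b p r := by
  unfold ColorLt at *
  omega

lemma eq_of_not_colorLt (hp : 1 ≤ p) (hq : 1 ≤ q) (hpq : ¬ColorLt b p q) (hqp : ¬ColorLt b q p) :
    p = q := by
  have hcoord : color b p = color b q ∧ segm b p = segm b q := by
    unfold ColorLt at *
    omega
  have hp' := segm_mul_add_color (b := b) hp
  rw [hcoord.1, hcoord.2, segm_mul_add_color hq] at hp'
  exact (Nat.add_right_cancel hp').symm

lemma ColorLt.rank_le (h : ColorLt b p q) : rank b n p ≤ rank b n q :=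
  Finset.card_le_card <| Finset.monotone_filter_right _ fun _ _ hr ↦ hr.trans h

lemma colorLt_of_rank_lt (hp : 1 ≤ p) (hq : 1 ≤ q) (h : rank b n p < rank b n q) :
    ColorLt b p q := by
  by_contra hpq
  have hqp : ¬ColorLt b q p := fun hqp ↦ h.not_ge hqp.rank_le
  exact h.ne (congrArg (rank b n) (eq_of_not_colorLt hp hq hpq hqp))

lemma abs_sub_le_of_colorLt (hp : 1 ≤ p) (hq : 1 ≤ q) (h : ColorLt b p q)
    (hle : segm b q ≤ segm b p) (hle_succ : segm b p ≤ segm b q + 1) :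
    |(p : ℤ) - q| ≤ b := by
  have hp_color := one_le_color b p
  have hp_color' := color_le b p
  have hq_color := one_le_color b q
  have hq_color' := color_le b q
  have hp_eq := segm_mul_add_color (b := b) hp
  have hq_eq := segm_mul_add_color (b := b) hq
  obtain hsegm | hsegm : segm b p = segm b q ∨ segm b p = segm b q + 1 := by omega
  · have hsub : (p : ℤ) - q = color b p - color b q := by
      rw [hsegm] at hp_eq
      omega
    rw [hsub, abs_le]
    omega
  · have hcolor : color b p < color b q := by
      unfold ColorLt at h
      omega
    have hsub : (p : ℤ) - q = (b + 1) - (color b q - color b p) := by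
      rw [hsegm, add_one_mul] at hp_eq
      omega
    rw [hsub, abs_le]
    omega

lemma bijOn_Icc_of_rank_eq {pos : ℕ → ℕ}
    (hpos : ∀ k, 1 ≤ k → k ≤ n → (1 ≤ pos k ∧ pos k ≤ n) ∧ rank b n (pos k) = k - 1) :
    Set.BijOn pos (Set.Icc 1 n) (Set.Icc 1 n) := by
  have hmaps : Set.MapsTo pos (Set.Icc 1 n) (Set.Icc 1 n) := fun k hk ↦ (hpos k hk.1 hk.2).1
  have hinj : Set.InjOn pos (Set.Icc 1 n) := by
    rintro j ⟨hj, hjn⟩ k ⟨hk, hkn⟩ heq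
    have hj_rank := (hpos j hj hjn).2
    rw [heq, (hpos k hk hkn).2] at hj_rank
    omega
  exact ((Set.finite_Icc 1 n).injOn_iff_bijOn_of_mapsTo hmaps).1 hinj

end ColorOrder

section Extension

variable {V : Type*} {G : SimpleGraph V}

lemma IsExtension.eq_some {s s' : V → Option ℤ} (h : IsExtension G s s') {x : V} {i : ℤ}
    (hx : s x = some i) : s' x = some i := by
  obtain ⟨v, hv, -, hs', -⟩ := h
  have hne : x ≠ v := by
    rintro rfl
    simp [hx] at hv
  rw [hs' x hne, hx]

lemma IsExtension.sub_one_le_and_le {s s' : V → Option ℤ} (h : IsExtension G s s') {u x : V}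
    {k i : ℤ} (hx : s x = none) (hadj : G.Adj u x) (hu : s' u = some k) (hx' : s' x = some i) :
    k - 1 ≤ i ∧ i ≤ k := by
  obtain ⟨v, -, -, hs', hbound⟩ := h
  obtain rfl : x = v := by
    by_contra hne
    simp [hs' x hne, hx] at hx'
  exact hbound u k i hadj hu hx'

variable {n : ℕ} {s : ℕ → V → Option ℤ}

lemma eq_some_of_le_of_isExtension (hext : ∀ k, k < n → IsExtension G (s k) (s (k + 1)))
    {j k : ℕ} (hjk : j ≤ k) (hk : k ≤ n) {x : V} {i : ℤ} (hx : s j x = some i) :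
    s k x = some i := by
  induction k, hjk using Nat.le_induction with
  | base => exact hx
  | succ k _ ih => exact (hext k hk).eq_some (ih (Nat.le_of_succ_le hk))

lemma injOn_of_isExtension (hext : ∀ k, k < n → IsExtension G (s k) (s (k + 1))) {v : ℕ → V}
    (hnew : ∀ k, 1 ≤ k → k ≤ n → s (k - 1) (v k) = none)
    (hdom : ∀ k, 1 ≤ k → k ≤ n → (s k (v k)).isSome) : Set.InjOn v (Set.Icc 1 n) := by
  have hne : ∀ j k, 1 ≤ j → j < k → k ≤ n → v j ≠ v k := by
    intro j k hj hjk hk heq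
    obtain ⟨i, hi⟩ := Option.isSome_iff_exists.1 (hdom j hj (by omega))
    have hsome := eq_some_of_le_of_isExtension hext (Nat.le_sub_one_of_lt hjk) (by omega) hi
    rw [heq, hnew k (by omega) hk] at hsome
    cases hsome
  intro j hj k hk heq
  rcases lt_trichotomy j k with hjk | hjk | hkj
  · exact absurd heq (hne j k hj.1 hjk hk.2)
  · exact hjk
  · exact absurd heq.symm (hne k j hk.1 hkj hj.2)

end Extension

lemma abs_pos_sub_pos_le_of_adj {V : Type*} {G : SimpleGraph V} {b n : ℕ} {s : ℕ → V → Option ℤ}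
    (hext : ∀ k, k < n → IsExtension G (s k) (s (k + 1))) {v : ℕ → V}
    (hnew : ∀ k, 1 ≤ k → k ≤ n → s (k - 1) (v k) = none) {pos : ℕ → ℕ}
    (hpos : ∀ k, 1 ≤ k → k ≤ n → (1 ≤ pos k ∧ pos k ≤ n) ∧ rank b n (pos k) = k - 1)
    (hval : ∀ k, 1 ≤ k → k ≤ n → s k (v k) = some ((segm b (pos k) : ℤ) - 1))
    {j k : ℕ} (hj : j ∈ Set.Icc 1 n) (hk : k ∈ Set.Icc 1 n) (hadj : G.Adj (v j) (v k)) :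
    |(pos j : ℤ) - pos k| ≤ b := by
  wlog hjk : j < k generalizing j k
  · have hne : k ≠ j := fun h ↦ hadj.ne (congrArg v h.symm)
    rw [abs_sub_comm]
    exact this hk hj hadj.symm (lt_of_le_of_ne (not_lt.1 hjk) hne)
  obtain ⟨m, rfl⟩ := Nat.exists_eq_add_of_le' hk.1
  obtain ⟨⟨hj_pos, -⟩, hj_rank⟩ := hpos j hj.1 hj.2
  obtain ⟨⟨hm_pos, -⟩, hm_rank⟩ := hpos (m + 1) hk.1 hk.2
  have hcolor : ColorLt b (pos j) (pos (m + 1)) := by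
    have hj_one : 1 ≤ j := hj.1
    exact colorLt_of_rank_lt (n := n) hj_pos hm_pos (by omega)
  have hvj : s (m + 1) (v j) = some ((segm b (pos j) : ℤ) - 1) :=
    eq_some_of_le_of_isExtension hext hjk.le hk.2 (hval j hj.1 hj.2)
  have hsegm := (hext m hk.2).sub_one_le_and_le (hnew (m + 1) hk.1 hk.2) hadj hvj
    (hval (m + 1) hk.1 hk.2)
  exact abs_sub_le_of_colorLt hj_pos hm_pos hcolor (by omega) (by omega)

theorem stmt9_general {V : Type*} [Fintype V] (G : SimpleGraph V) (b n : ℕ)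
    (hcard : Fintype.card V = n) (s : ℕ → V → Option ℤ)
    (hext : ∀ k, k < n → IsExtension G (s k) (s (k + 1))) (v : ℕ → V)
    (hnew : ∀ k, 1 ≤ k → k ≤ n → s (k - 1) (v k) = none) (pos : ℕ → ℕ)
    (hpos : ∀ k, 1 ≤ k → k ≤ n → (1 ≤ pos k ∧ pos k ≤ n) ∧ rank b n (pos k) = k - 1)
    (hval : ∀ k, 1 ≤ k → k ≤ n → s k (v k) = some ((segm b (pos k) : ℤ) - 1)) :
    ∃ π : V → ℕ, Set.BijOn π Set.univ (Set.Icc 1 n) ∧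
      (∀ k, 1 ≤ k → k ≤ n → π (v k) = pos k) ∧
      ∀ u w, G.Adj u w → |(π u : ℤ) - (π w : ℤ)| ≤ b := by
  have hv_inj : Set.InjOn v (Set.Icc 1 n) :=
    injOn_of_isExtension hext hnew fun k hk hkn ↦ by simp [hval k hk hkn]
  have hv_surj : Set.SurjOn v (Set.Icc 1 n) Set.univ := by
    simpa using Finset.surjOn_of_injOn_of_card_le (s := Finset.Icc 1 n) (t := Finset.univ) v
      (fun _ _ ↦ Finset.mem_coe.2 (Finset.mem_univ _)) (by simpa using hv_inj) (by simp [hcard])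
  obtain ⟨π, hπ, hπv⟩ :=
    exists_bijOn_forall_apply_eq ⟨Set.mapsTo_univ _ _, hv_inj, hv_surj⟩ (bijOn_Icc_of_rank_eq hpos)
  refine ⟨π, hπ, fun k hk hkn ↦ hπv k ⟨hk, hkn⟩, fun u w hadj ↦ ?_⟩
  obtain ⟨j, hj, rfl⟩ := hv_surj (Set.mem_univ u)
  obtain ⟨k, hk, rfl⟩ := hv_surj (Set.mem_univ w)
  rw [hπv j hj, hπv k hk]
  exact abs_pos_sub_pos_le_of_adj hext hnew hpos hval hj hk hadj

/-- if `s 0, s 1, …, s n` are states (for the segment assignment `φ`)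
with `s 0` the empty partial map and each `s (k+1)` an extension of `s k`, `v k` is
the unique vertex of `dom (s k) \ dom (s (k−1))`, `pos k` is the `k`-th position in
the color order (i.e. the position of rank `k − 1`), and `s k (v k)` is the base
segment containing `pos k`, then the ordering `π` assigning position `pos k` to the
vertex `v k` is a `b`-ordering of `G`. -/
theorem stmt9 {V : Type*} [Fintype V] (G : SimpleGraph V) (b n : ℕ)
    (hb : 1 ≤ b) (hn : 2 ≤ n) (hcard : Fintype.card V = n)
    (u0 : V) (pa : V → V) (htree : IsRootedSpanningTree G u0 pa)
    (φ : V → ℤ)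
    (hφinner : ∀ v, v ≠ u0 → ¬ IsLeaf pa v → |φ v - φ (pa v)| = 1)
    (hφleaf : ∀ v, IsLeaf pa v → φ v = φ (pa v) - 1)
    (s : ℕ → V → Option ℤ)
    (hstate : ∀ k, k ≤ n → IsState G b n pa φ (s k))
    (hzero : ∀ v, s 0 v = none)
    (hext : ∀ k, k < n → IsExtension G (s k) (s (k + 1)))
    (v : ℕ → V)
    (hv : ∀ k, 1 ≤ k → k ≤ n → (s k (v k)).isSome ∧ s (k - 1) (v k) = none)
    (pos : ℕ → ℕ)
    (hpos : ∀ k, 1 ≤ k → k ≤ n →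
      (1 ≤ pos k ∧ pos k ≤ n) ∧ rank b n (pos k) = k - 1)
    (hval : ∀ k, 1 ≤ k → k ≤ n →
      s k (v k) = some ((segm b (pos k) : ℤ) - 1)) :
    ∃ π : V → ℕ, Set.BijOn π Set.univ (Set.Icc 1 n) ∧
      (∀ k, 1 ≤ k → k ≤ n → π (v k) = pos k) ∧
      ∀ u w, G.Adj u w → |(π u : ℤ) - (π w : ℤ)| ≤ b := by
  exact stmt9_general G b n hcard s hext v (fun k hk hkn ↦ (hv k hk hkn).2) pos hpos hval
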